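/- arXiv:2410.23440 — 4 statements merged into one kernel-verified Lean document; each statement's English description precedes it below -/
import Mathlib

section
/- Let α > 0 and λ_i := i^{-α} for every i ≥ 1, let u_γ := (1 + Σ_{i≥1} γ_i/λ_i)^{-1/2} for γ ∈ Γ, and let π be a bijection from the positive integers onto Γ with u_{π(1)} ≥ u_{π(2)} ≥ ⋯. Then for every δ > 0 and every η > 0 there exists s̄ ∈ ℕ (depending on α, δ, η) such that for all s ≥ s̄ one has u_{π(s+1)} ≤ η · (log s)^{-1/(2(1/α + δ))}. -/
open Finset

/-- The set of multi-indices: finitely supported sequences of nonnegative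
integers indexed by the positive integers. -/
abbrev MultiIndex : Type := ℕ+ →₀ ℕ

/-- The weight `u_γ = (1 + ∑_{i ≥ 1} γ_i / λ_i)^{-1/2}`. -/
noncomputable def uweight (lam : ℕ+ → ℝ) (γ : MultiIndex) : ℝ :=
  (1 + ∑ i ∈ γ.support, (γ i : ℝ) / lam i) ^ (-(1 : ℝ) / 2)

/-!
Let `w γ = u_γ⁻²`. If `λ_i ≤ C i^{-α}` and `w γ ≤ W`, then `γ_i i^α ≤ x := C W` for every `i`, so
`γ` is supported in `i ≤ x^{1/α}` and has entries at most `x`. Hence the sublevel set of `w` at `W`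
has at most `(x + 1)^{x^{1/α}}` elements. As it contains `π 1, …, π s` for `W = w (π s)`, we get
`log s ≤ x^{1/α} log (x + 1) = o(W^{1/α + δ})`, which is the claim after taking roots and
inverting.
-/

open Filter Asymptotics

lemma isLittleO_rpow_mul_log_add_one (a : ℝ) {δ : ℝ} (hδ : 0 < δ) :
    (fun x : ℝ => x ^ a * Real.log (x + 1)) =o[atTop] fun x => x ^ (a + δ) := by
  have h_diff : (fun x : ℝ => Real.log (x + 1) - Real.log x) =o[atTop] fun x => x ^ δ :=
    ((Real.tendsto_log_comp_add_sub_log 1).isBigO_one ℝ).trans_isLittleO <|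
      isLittleO_const_left.2 <| .inr <| tendsto_norm_atTop_atTop.comp (tendsto_rpow_atTop hδ)
  have h_log : (fun x : ℝ => Real.log (x + 1)) =o[atTop] fun x => x ^ δ := by
    simpa only [sub_add_cancel] using h_diff.add (isLittleO_log_rpow_atTop hδ)
  refine ((isBigO_refl (fun x : ℝ => x ^ a) atTop).mul_isLittleO h_log).congr' .rfl ?_
  filter_upwards [eventually_gt_atTop 0] with x hx
  rw [Real.rpow_add hx]

lemma log_floor_add_one_pow_floor_le {x y : ℝ} (hx : 0 ≤ x) (hy : 0 ≤ y) :
    Real.log (((⌊x⌋₊ + 1) ^ ⌊y⌋₊ : ℕ) : ℝ) ≤ y * Real.log (x + 1) := by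
  push_cast
  rw [Real.log_pow]
  gcongr
  · exact Real.log_nonneg (by linarith)
  · exact Nat.floor_le hy
  · exact Nat.floor_le hx

lemma le_ncard_sublevel_of_monotone_comp {X β : Type*} [Preorder β] {f : X → β} {π : ℕ+ → X}
    (hinj : Function.Injective π) (hmono : Monotone fun n => f (π n)) (n : ℕ+)
    (hfin : {x | f x ≤ f (π n)}.Finite) : (n : ℕ) ≤ {x | f x ≤ f (π n)}.ncard :=
  calc
    (n : ℕ) = (π '' (Finset.Icc 1 n : Finset ℕ+)).ncard := by
      rw [Set.ncard_image_of_injective _ hinj, Set.ncard_coe_finset, PNat.card_Icc]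
      simp
    _ ≤ {x | f x ≤ f (π n)}.ncard := by
      refine Set.ncard_le_ncard ?_ hfin
      rintro _ ⟨k, hk, rfl⟩
      exact hmono (Finset.mem_Icc.1 hk).2

/-- The quantity `1 + ∑_{i ≥ 1} γ_i / λ_i = u_γ⁻²`, of which `uweight` is the power `-1/2`. -/
noncomputable def weightSum (lam : ℕ+ → ℝ) (γ : MultiIndex) : ℝ :=
  1 + ∑ i ∈ γ.support, (γ i : ℝ) / lam i

section WeightSum

variable {lam : ℕ+ → ℝ}

lemma one_le_weightSum (hlam : ∀ i, 0 ≤ lam i) (γ : MultiIndex) : 1 ≤ weightSum lam γ :=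
  le_add_of_nonneg_right <| Finset.sum_nonneg fun i _ => div_nonneg (γ i).cast_nonneg (hlam i)

lemma weightSum_pos (hlam : ∀ i, 0 ≤ lam i) (γ : MultiIndex) : 0 < weightSum lam γ :=
  one_pos.trans_le (one_le_weightSum hlam γ)

lemma div_le_weightSum (hlam : ∀ i, 0 ≤ lam i) (γ : MultiIndex) (i : ℕ+) :
    γ i / lam i ≤ weightSum lam γ := by
  by_cases hi : i ∈ γ.support
  · have h_term : γ i / lam i ≤ ∑ j ∈ γ.support, γ j / lam j :=
      Finset.single_le_sum (f := fun j => γ j / lam j)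
        (fun j _ => div_nonneg (γ j).cast_nonneg (hlam j)) hi
    exact h_term.trans (le_add_of_nonneg_left zero_le_one)
  · rw [Finsupp.notMem_support_iff.1 hi, Nat.cast_zero, zero_div]
    exact (weightSum_pos hlam γ).le

lemma uweight_eq_inv_rpow (hlam : ∀ i, 0 ≤ lam i) (γ : MultiIndex) :
    uweight lam γ = (weightSum lam γ ^ (1 / 2 : ℝ))⁻¹ := by
  rw [← Real.rpow_neg (weightSum_pos hlam γ).le, ← neg_div]
  rfl

lemma uweight_le_uweight_iff (hlam : ∀ i, 0 ≤ lam i) {γ γ' : MultiIndex} :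
    uweight lam γ ≤ uweight lam γ' ↔ weightSum lam γ' ≤ weightSum lam γ :=
  Real.rpow_le_rpow_iff_of_neg (weightSum_pos hlam γ) (weightSum_pos hlam γ') (by norm_num)

end WeightSum

/-- The box of multi-indices supported in `{1, …, K}` with all entries at most `N`. -/
noncomputable def multiIndexBox (K N : ℕ) : Finset MultiIndex :=
  ((range K).map ⟨Nat.succPNat, Nat.succPNat_injective⟩).finsupp fun _ => range (N + 1)

section MultiIndexBox

variable {K N : ℕ}

lemma card_multiIndexBox : #(multiIndexBox K N) = (N + 1) ^ K := by
  simp [multiIndexBox, Finset.card_finsupp]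

lemma mem_multiIndexBox_of_forall_le {γ : MultiIndex} (hsupp : ∀ i : ℕ+, γ i ≠ 0 → (i : ℕ) ≤ K)
    (hentry : ∀ i, γ i ≤ N) : γ ∈ multiIndexBox K N := by
  refine Finset.mem_finsupp_iff.2 ⟨fun i hi => ?_, fun i _ =>
    Finset.mem_range.2 (Nat.lt_succ_of_le (hentry i))⟩
  refine Finset.mem_map.2 ⟨i.natPred, Finset.mem_range.2 ?_, PNat.succPNat_natPred i⟩
  rw [← Nat.add_one_le_iff, PNat.natPred_add_one]
  exact hsupp i (Finsupp.mem_support_iff.1 hi)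

end MultiIndexBox

section AlgebraicDecay

variable {lam : ℕ+ → ℝ} {α C : ℝ}

lemma coe_mul_rpow_le_mul_weightSum (hpos : ∀ i, 0 < lam i)
    (hle : ∀ i : ℕ+, lam i ≤ C * (i : ℝ) ^ (-α)) (γ : MultiIndex) (i : ℕ+) :
    γ i * (i : ℝ) ^ α ≤ C * weightSum lam γ := by
  have hi : (0 : ℝ) < (i : ℝ) ^ α := Real.rpow_pos_of_pos (by exact_mod_cast i.pos) α
  have hlam : ∀ j, 0 ≤ lam j := fun j => (hpos j).le
  rw [← le_div_iff₀ hi]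
  calc
    (γ i : ℝ) ≤ weightSum lam γ * lam i := (div_le_iff₀ (hpos i)).1 (div_le_weightSum hlam γ i)
    _ ≤ weightSum lam γ * (C * (i : ℝ) ^ (-α)) :=
      mul_le_mul_of_nonneg_left (hle i) (weightSum_pos hlam γ).le
    _ = C * weightSum lam γ / (i : ℝ) ^ α := by
      rw [Real.rpow_neg (Nat.cast_nonneg _)]
      ring

lemma const_pos_of_le_mul_rpow (hpos : ∀ i, 0 < lam i)
    (hle : ∀ i : ℕ+, lam i ≤ C * (i : ℝ) ^ (-α)) : 0 < C := by
  simpa using (hpos 1).trans_le (hle 1)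

lemma sublevel_weightSum_subset_multiIndexBox (hα : 0 < α) (hpos : ∀ i, 0 < lam i)
    (hle : ∀ i : ℕ+, lam i ≤ C * (i : ℝ) ^ (-α)) (W : ℝ) :
    {γ | weightSum lam γ ≤ W} ⊆
      (multiIndexBox ⌊(C * W) ^ (1 / α)⌋₊ ⌊C * W⌋₊ : Set MultiIndex) := by
  intro γ hγ
  have h_coord (i : ℕ+) : γ i * (i : ℝ) ^ α ≤ C * W :=
    (coe_mul_rpow_le_mul_weightSum hpos hle γ i).trans <|
      mul_le_mul_of_nonneg_left hγ (const_pos_of_le_mul_rpow hpos hle).le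
  refine Finset.mem_coe.2 <| mem_multiIndexBox_of_forall_le
    (fun i hi => Nat.le_floor ?_) fun i => Nat.le_floor ?_
  · have h_one : (1 : ℝ) ≤ γ i := by exact_mod_cast Nat.one_le_iff_ne_zero.2 hi
    have h_pow : (i : ℝ) ^ α ≤ C * W :=
      (le_mul_of_one_le_left (by positivity) h_one).trans (h_coord i)
    rw [one_div]
    exact (Real.le_rpow_inv_iff_of_pos (by positivity) (le_trans (by positivity) h_pow) hα).2 h_pow
  · have h_one : (1 : ℝ) ≤ (i : ℝ) ^ α :=
      Real.one_le_rpow (Nat.one_le_cast.2 i.pos) hα.le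
    exact (le_mul_of_one_le_right (Nat.cast_nonneg _) h_one).trans (h_coord i)

lemma finite_sublevel_weightSum (hα : 0 < α) (hpos : ∀ i, 0 < lam i)
    (hle : ∀ i : ℕ+, lam i ≤ C * (i : ℝ) ^ (-α)) (W : ℝ) : {γ | weightSum lam γ ≤ W}.Finite :=
  (Finset.finite_toSet _).subset (sublevel_weightSum_subset_multiIndexBox hα hpos hle W)

lemma ncard_sublevel_weightSum_le (hα : 0 < α) (hpos : ∀ i, 0 < lam i)
    (hle : ∀ i : ℕ+, lam i ≤ C * (i : ℝ) ^ (-α)) (W : ℝ) :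
    {γ | weightSum lam γ ≤ W}.ncard ≤ (⌊C * W⌋₊ + 1) ^ ⌊(C * W) ^ (1 / α)⌋₊ := by
  rw [← card_multiIndexBox, ← Set.ncard_coe_finset]
  exact Set.ncard_le_ncard (sublevel_weightSum_subset_multiIndexBox hα hpos hle W)
    (Finset.finite_toSet _)

lemma tendsto_weightSum_cofinite (hα : 0 < α) (hpos : ∀ i, 0 < lam i)
    (hle : ∀ i : ℕ+, lam i ≤ C * (i : ℝ) ^ (-α)) : Tendsto (weightSum lam) cofinite atTop := by
  refine tendsto_atTop.2 fun W => ?_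
  filter_upwards [(finite_sublevel_weightSum hα hpos hle W).compl_mem_cofinite] with γ hγ
  exact le_of_not_ge hγ

variable {π : ℕ+ → MultiIndex}

lemma log_le_rpow_mul_log_weightSum (hα : 0 < α) (hpos : ∀ i, 0 < lam i)
    (hle : ∀ i : ℕ+, lam i ≤ C * (i : ℝ) ^ (-α)) (hinj : Function.Injective π)
    (hdec : Antitone fun n => uweight lam (π n)) (s : ℕ+) :
    Real.log s ≤ (C * weightSum lam (π s)) ^ (1 / α) *
      Real.log (C * weightSum lam (π s) + 1) := by
  have hlam : ∀ i, 0 ≤ lam i := fun i => (hpos i).le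
  have hmono : Monotone fun n => weightSum lam (π n) := fun _ _ h =>
    (uweight_le_uweight_iff hlam).1 (hdec h)
  have h_count : (s : ℕ) ≤ _ :=
    (le_ncard_sublevel_of_monotone_comp hinj hmono s
      (finite_sublevel_weightSum hα hpos hle _)).trans
        (ncard_sublevel_weightSum_le hα hpos hle _)
  have h_nonneg : 0 ≤ C * weightSum lam (π s) :=
    mul_nonneg (const_pos_of_le_mul_rpow hpos hle).le (weightSum_pos hlam _).le
  exact (Real.log_le_log (by exact_mod_cast s.pos) (by exact_mod_cast h_count)).trans
    (log_floor_add_one_pow_floor_le h_nonneg (by positivity))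

lemma isLittleO_log_weightSum_rpow (hα : 0 < α) (hpos : ∀ i, 0 < lam i)
    (hle : ∀ i : ℕ+, lam i ≤ C * (i : ℝ) ^ (-α)) (hinj : Function.Injective π)
    (hdec : Antitone fun n => uweight lam (π n)) {δ : ℝ} (hδ : 0 < δ) :
    (fun s : ℕ+ => Real.log s) =o[atTop] fun s => weightSum lam (π s) ^ (1 / α + δ) := by
  have hC : 0 < C := const_pos_of_le_mul_rpow hpos hle
  have h_tendsto : Tendsto (fun s => C * weightSum lam (π s)) atTop atTop :=
    ((tendsto_weightSum_cofinite hα hpos hle).comp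
      (hinj.tendsto_cofinite.mono_left atTop_le_cofinite)).const_mul_atTop hC
  have h_log_le : (fun s : ℕ+ => Real.log s) =O[atTop] fun s =>
      (C * weightSum lam (π s)) ^ (1 / α) * Real.log (C * weightSum lam (π s) + 1) := by
    refine .of_norm_le fun s => ?_
    rw [Real.norm_of_nonneg (Real.log_natCast_nonneg _)]
    exact log_le_rpow_mul_log_weightSum hα hpos hle hinj hdec s
  refine (h_log_le.trans_isLittleO
    ((isLittleO_rpow_mul_log_add_one (1 / α) hδ).comp_tendsto h_tendsto)).trans_isBigO ?_
  simp only [Function.comp_def,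
    Real.mul_rpow hC.le (weightSum_pos (fun i => (hpos i).le) _).le]
  exact isBigO_const_mul_self _ _ _

theorem isLittleO_uweight_log_rpow (hα : 0 < α) (hpos : ∀ i, 0 < lam i)
    (hle : ∀ i : ℕ+, lam i ≤ C * (i : ℝ) ^ (-α)) (hinj : Function.Injective π)
    (hdec : Antitone fun n => uweight lam (π n)) {δ : ℝ} (hδ : 0 < δ) :
    (fun s => uweight lam (π s)) =o[atTop]
      fun s : ℕ+ => Real.log s ^ (-(1 / (2 * (1 / α + δ)))) := by
  have hlam : ∀ i, 0 ≤ lam i := fun i => (hpos i).le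
  have h_root : (fun s : ℕ+ => Real.log s ^ (1 / (2 * (1 / α + δ)))) =o[atTop]
      fun s => weightSum lam (π s) ^ (1 / 2 : ℝ) := by
    have h_exp : (1 / α + δ) * (1 / (2 * (1 / α + δ))) = 1 / 2 := by
      field_simp
    simpa only [← Real.rpow_mul (weightSum_pos hlam _).le, h_exp] using
      (isLittleO_log_weightSum_rpow hα hpos hle hinj hdec hδ).rpow
        (r := 1 / (2 * (1 / α + δ))) (by positivity)
        (.of_forall fun s => Real.rpow_nonneg (weightSum_pos hlam _).le _)
  have h_ne : ∀ᶠ s : ℕ+ in atTop, Real.log s ^ (1 / (2 * (1 / α + δ))) ≠ 0 := by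
    filter_upwards [eventually_gt_atTop 1] with s hs
    exact (Real.rpow_pos_of_pos (Real.log_pos (by exact_mod_cast hs)) _).ne'
  simpa only [uweight_eq_inv_rpow hlam, Real.rpow_neg (Real.log_natCast_nonneg _)] using
    h_root.inv_rev (h_ne.mono fun _ h h0 => absurd h0 h)

theorem uweight_decay_algebraic_general (hα : 0 < α) (hpos : ∀ i, 0 < lam i)
    (hle : ∀ i : ℕ+, lam i ≤ C * (i : ℝ) ^ (-α)) (hinj : Function.Injective π)
    (hdec : Antitone fun n => uweight lam (π n)) {δ η : ℝ} (hδ : 0 < δ) (hη : 0 < η) :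
    ∃ sbar : ℕ+, ∀ s : ℕ+, sbar ≤ s →
      uweight lam (π s) ≤ η * Real.log s ^ (-(1 / (2 * (1 / α + δ)))) := by
  refine eventually_atTop.1 ?_
  filter_upwards [(isLittleO_uweight_log_rpow hα hpos hle hinj hdec hδ).bound hη] with s hs
  rw [Real.norm_of_nonneg (Real.rpow_nonneg (Real.log_natCast_nonneg _) _)] at hs
  exact (Real.le_norm_self _).trans hs

end AlgebraicDecay

/-- **Decay of `u_{π(s+1)}` for algebraic spectral decay `λ_i = i^{-α}`.**
For every `δ, η > 0` there exists `s̄` such that for all `s ≥ s̄`,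
`u_{π(s+1)} ≤ η · (log s)^{-1/(2(1/α + δ))}`. -/
theorem uweight_decay_algebraic
    (α : ℝ) (hα : 0 < α)
    (lam : ℕ+ → ℝ) (hlam : ∀ i : ℕ+, lam i = (i : ℝ) ^ (-α))
    (π : ℕ+ → MultiIndex) (hbij : Function.Bijective π)
    (hdec : Antitone fun n => uweight lam (π n))
    (δ η : ℝ) (hδ : 0 < δ) (hη : 0 < η) :
    ∃ sbar : ℕ+, ∀ s : ℕ+, sbar ≤ s →
      uweight lam (π (s + 1))
        ≤ η * (Real.log s) ^ (-(1 / (2 * (1 / α + δ))) : ℝ) := by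
  have hpos (i : ℕ+) : 0 < lam i := hlam i ▸ Real.rpow_pos_of_pos (by exact_mod_cast i.pos) _
  have hle (i : ℕ+) : lam i ≤ 1 * (i : ℝ) ^ (-α) := by rw [hlam, one_mul]
  obtain ⟨sbar, hsbar⟩ := uweight_decay_algebraic_general hα hpos hle hbij.injective hdec hδ hη
  exact ⟨sbar, fun s hs => (hdec (PNat.lt_add_right s 1).le).trans (hsbar s hs)⟩
end

section
/- Let α, β > 0 and λ_i := exp(−α·i^β) for every i ≥ 1, let u_γ := (1 + Σ_{i≥1} γ_i/λ_i)^{-1/2} for γ ∈ Γ, and let π be a bijection from the positive integers onto Γ with u_{π(1)} ≥ u_{π(2)} ≥ ⋯. Then for every δ with 0 < δ < β there exist a constant c > 0 and s̄ ∈ ℕ (depending on α, β, δ) such that for all s ≥ s̄ one has u_{π(s+1)} ≥ c · exp( −(1/2) · α^{1/(β+1)} · ((β+1)/(β−δ))^{1/(1+1/β)} · (log(s+1))^{1/(1+1/β)} ). -/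
open Finset

/-!
Give each of the first `d` indices an equal share `e ^ L / d` of a budget `e ^ L`. The multi-indices
respecting these shares form a box with at least `∏ i ≤ d, e ^ L * lam i / d` elements, and all of
them have weight at least `(2 * e ^ L) ^ (-1 / 2)`. If the box has more than `s` elements, one of
them is ranked after position `s`, so this is a lower bound for the weight at position `s + 1`. For
`lam i = exp (-α * i ^ β)` the logarithm of the product is about
`d * L - d * log d - α * d ^ (β + 1) / (β + 1)`. With `L = α * d ^ β` its leading term is
`α * β / (β + 1) * d ^ (β + 1)`, and the loss `δ` absorbs `d * log d` and the rounding of `d`.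
-/

section Rearrangement

variable {ι R : Type*} [Preorder R]

theorem le_apply_add_one_of_lt_card {π : ℕ+ → ι} (hπ : Function.Surjective π) {u : ι → R}
    (hu : Antitone fun n => u (π n)) {s : ℕ+} {F : Finset ι} (hs : (s : ℕ) < #F) {b : R}
    (hb : ∀ γ ∈ F, b ≤ u γ) : b ≤ u (π (s + 1)) := by
  classical
  obtain ⟨γ, hγF, hγ⟩ : ∃ γ ∈ F, γ ∉ (Icc 1 s).image π :=
    exists_mem_notMem_of_card_lt_card (card_image_le.trans_lt (by simpa using hs))
  obtain ⟨n, rfl⟩ := hπ γ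
  have hsn : s < n := by
    contrapose! hγ
    exact mem_image_of_mem π (mem_Icc.2 ⟨one_le, hγ⟩)
  exact (hb _ hγF).trans (hu (PNat.add_one_le_iff.2 hsn))

end Rearrangement

section BudgetBox

variable {ι : Type*} {lam : ι → ℝ} {S : Finset ι} {T : ℝ}

/-- The box of multi-indices supported in `S` whose terms `γ i / lam i` each use at most an equal
share `T / #S` of the budget `T`. It serves as an easily counted subset of the simplex
`∑ i, γ i / lam i ≤ T`. -/
noncomputable def budgetBox (lam : ι → ℝ) (S : Finset ι) (T : ℝ) : Finset (ι →₀ ℕ) :=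
  S.finsupp fun i => Iic ⌊T * lam i / #S⌋₊

theorem sum_div_le_of_mem_budgetBox (hlam : ∀ i ∈ S, 0 < lam i) (hT : 0 ≤ T) {γ : ι →₀ ℕ}
    (hγ : γ ∈ budgetBox lam S T) : ∑ i ∈ γ.support, (γ i : ℝ) / lam i ≤ T := by
  obtain ⟨hsupp, hle⟩ := mem_finsupp_iff.1 hγ
  have hshare (i : ι) (hi : i ∈ S) : (γ i : ℝ) / lam i ≤ T / #S := by
    have hpos := hlam i hi
    rw [div_le_iff₀ hpos, div_mul_eq_mul_div]
    exact (Nat.le_floor_iff (by positivity)).1 (mem_Iic.1 (hle i hi))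
  calc ∑ i ∈ γ.support, (γ i : ℝ) / lam i
      ≤ ∑ i ∈ S, (γ i : ℝ) / lam i :=
        sum_le_sum_of_subset_of_nonneg hsupp fun i hi _ =>
          div_nonneg (γ i).cast_nonneg (hlam i hi).le
    _ ≤ #S • (T / #S) := sum_le_card_nsmul _ _ _ hshare
    _ ≤ T := by
        rw [nsmul_eq_mul, mul_div_left_comm]
        exact mul_le_of_le_one_right hT (div_self_le_one _)

theorem prod_le_card_budgetBox (hlam : ∀ i ∈ S, 0 ≤ lam i) (hT : 0 ≤ T) :
    ∏ i ∈ S, T * lam i / #S ≤ #(budgetBox lam S T) := by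
  rw [budgetBox, card_finsupp, Nat.cast_prod]
  refine prod_le_prod (fun i hi => ?_) fun i _ => ?_
  · have := hlam i hi
    positivity
  · simpa using (Nat.lt_floor_add_one (T * lam i / #S)).le

end BudgetBox

theorem rpow_le_uweight {lam : ℕ+ → ℝ} (hlam : ∀ i, 0 ≤ lam i) {γ : MultiIndex} {T : ℝ}
    (hT : 1 ≤ T) (hγ : ∑ i ∈ γ.support, (γ i : ℝ) / lam i ≤ T) :
    (2 * T) ^ (-(1 : ℝ) / 2) ≤ uweight lam γ := by
  have hsum : 0 ≤ ∑ i ∈ γ.support, (γ i : ℝ) / lam i :=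
    sum_nonneg fun i _ => div_nonneg (γ i).cast_nonneg (hlam i)
  exact Real.rpow_le_rpow_of_nonpos (by positivity) (by linarith) (by norm_num)

theorem rpow_le_uweight_add_one_of_lt_prod {lam : ℕ+ → ℝ} (hlam : ∀ i, 0 < lam i)
    {π : ℕ+ → MultiIndex} (hπ : Function.Surjective π)
    (hdec : Antitone fun n => uweight lam (π n)) {S : Finset ℕ+} {T : ℝ} (hT : 1 ≤ T) {s : ℕ+}
    (hs : (s : ℝ) < ∏ i ∈ S, T * lam i / #S) :
    (2 * T) ^ (-(1 : ℝ) / 2) ≤ uweight lam (π (s + 1)) := by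
  have hT0 : 0 ≤ T := zero_le_one.trans hT
  have hcard : (s : ℕ) < #(budgetBox lam S T) := by
    exact_mod_cast hs.trans_le (prod_le_card_budgetBox (fun i _ => (hlam i).le) hT0)
  exact le_apply_add_one_of_lt_card hπ hdec hcard fun γ hγ =>
    rpow_le_uweight (fun i => (hlam i).le) hT <|
      sum_div_le_of_mem_budgetBox (fun i _ => hlam i) hT0 hγ

theorem sum_range_one_add_rpow_le {β : ℝ} (hβ : 0 ≤ β) (d : ℕ) :
    ∑ k ∈ range d, (1 + k : ℝ) ^ β ≤ (d + 1 : ℝ) ^ (β + 1) / (β + 1) := by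
  have hmono : MonotoneOn (fun x : ℝ => x ^ β) (Set.Icc 1 (1 + d)) := fun x hx y _ hxy =>
    Real.rpow_le_rpow (zero_le_one.trans hx.1) hxy hβ
  calc ∑ k ∈ range d, (1 + k : ℝ) ^ β
      ≤ ∫ x in (1 : ℝ)..1 + d, x ^ β := hmono.sum_le_integral
    _ = ((d + 1 : ℝ) ^ (β + 1) - 1) / (β + 1) := by
        rw [integral_rpow (Or.inl (by linarith)), Real.one_rpow, add_comm (1 : ℝ)]
    _ ≤ (d + 1 : ℝ) ^ (β + 1) / (β + 1) := by
        gcongr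
        exact sub_le_self _ zero_le_one

/-- The indices `1, …, d`, on which the boxes for exponentially decaying `lam` are supported. -/
def firstIndices (d : ℕ) : Finset ℕ+ :=
  (range d).map Equiv.pnatEquivNat.symm.toEmbedding

theorem exp_le_prod_firstIndices {α β : ℝ} (hα : 0 ≤ α) (hβ : 0 ≤ β) {lam : ℕ+ → ℝ}
    (hlam : ∀ i : ℕ+, Real.exp (-(α * (i : ℝ) ^ β)) ≤ lam i) (d : ℕ) (L : ℝ) :
    Real.exp (d * (L - Real.log d) - α * ((d + 1 : ℝ) ^ (β + 1) / (β + 1)))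
      ≤ ∏ i ∈ firstIndices d, Real.exp L * lam i / #(firstIndices d) := by
  calc Real.exp (d * (L - Real.log d) - α * ((d + 1 : ℝ) ^ (β + 1) / (β + 1)))
      ≤ Real.exp (d * (L - Real.log d) - α * ∑ k ∈ range d, (1 + k : ℝ) ^ β) := by
        gcongr
        exact sum_range_one_add_rpow_le hβ d
    _ = Real.exp (∑ k ∈ range d, (L - Real.log d + -(α * (1 + k : ℝ) ^ β))) := by
        simp [mul_sum, mul_sub, ← sub_eq_add_neg]
    _ = ∏ k ∈ range d, Real.exp (L - Real.log d + -(α * (1 + k : ℝ) ^ β)) := Real.exp_sum _ _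
    _ ≤ ∏ k ∈ range d, Real.exp L * lam k.succPNat / d := by
        refine prod_le_prod (fun k _ => (Real.exp_pos _).le) fun k hk => ?_
        have hd : (0 : ℝ) < d := by exact_mod_cast (Nat.zero_le k).trans_lt (mem_range.1 hk)
        rw [Real.exp_add, Real.exp_sub, Real.exp_log hd, div_mul_eq_mul_div]
        gcongr
        simpa [add_comm] using hlam k.succPNat
    _ = ∏ i ∈ firstIndices d, Real.exp L * lam i / #(firstIndices d) := by
        simp [firstIndices]

section Asymptotics

open Filter Topology

variable {α β κ : ℝ}

theorem tendsto_floor_exponent_div_rpow (hβ : 0 < β) :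
    Tendsto (fun y : ℝ => (⌊y⌋₊ / y) * (α - Real.log y / y ^ β)
      - α * (((⌊y⌋₊ + 1) / y) ^ (β + 1) / (β + 1))) atTop (𝓝 (α * (β / (β + 1)))) := by
  have hfloor : Tendsto (fun y : ℝ => (⌊y⌋₊ : ℝ) / y) atTop (𝓝 1) := tendsto_nat_floor_div_atTop
  have hlog : Tendsto (fun y : ℝ => Real.log y / y ^ β) atTop (𝓝 0) :=
    (isLittleO_log_rpow_atTop hβ).tendsto_div_nhds_zero
  have hfloor_succ : Tendsto (fun y : ℝ => ((⌊y⌋₊ + 1 : ℝ) / y) ^ (β + 1)) atTop (𝓝 1) := by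
    simpa [add_div] using
      (hfloor.add tendsto_inv_atTop_zero).rpow_const (p := β + 1) (Or.inl (by norm_num))
  convert (hfloor.mul (hlog.const_sub α)).sub ((hfloor_succ.div_const (β + 1)).const_mul α) using 2
  field_simp
  ring

theorem eventually_mul_rpow_div_le_floor_exponent (hα : 0 < α) (hβ : 0 < β)
    (hκ : κ⁻¹ < β / (β + 1)) :
    ∀ᶠ y : ℝ in atTop, α * y ^ (β + 1) / κ
      ≤ ⌊y⌋₊ * (α * y ^ β - Real.log ⌊y⌋₊) - α * ((⌊y⌋₊ + 1 : ℝ) ^ (β + 1) / (β + 1)) := by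
  have hlim := (tendsto_floor_exponent_div_rpow hβ).eventually_const_lt
    (mul_lt_mul_of_pos_left hκ hα)
  filter_upwards [hlim, eventually_ge_atTop 1] with y hy hy1
  have hy0 : 0 < y := zero_lt_one.trans_le hy1
  have hfloor : (0 : ℝ) < ⌊y⌋₊ := by exact_mod_cast Nat.floor_pos.2 hy1
  have hrpow : y ^ (β + 1) = y ^ β * y := by rw [Real.rpow_add hy0, Real.rpow_one]
  calc α * y ^ (β + 1) / κ
      = y ^ (β + 1) * (α * κ⁻¹) := by ring
    _ ≤ y ^ (β + 1) * ((⌊y⌋₊ / y) * (α - Real.log y / y ^ β)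
          - α * (((⌊y⌋₊ + 1) / y) ^ (β + 1) / (β + 1))) := by gcongr
    _ = ⌊y⌋₊ * (α * y ^ β - Real.log y) - α * ((⌊y⌋₊ + 1 : ℝ) ^ (β + 1) / (β + 1)) := by
        rw [Real.div_rpow (by positivity) hy0.le, hrpow]
        field_simp
    _ ≤ ⌊y⌋₊ * (α * y ^ β - Real.log ⌊y⌋₊) - α * ((⌊y⌋₊ + 1 : ℝ) ^ (β + 1) / (β + 1)) := by
        gcongr
        exact Nat.floor_le hy0.le

/-- The solution `y` of `α * y ^ (β + 1) = κ * t`. If `κ > 1 + 1 / β` and `t` is large, the box on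
the first `⌊y⌋₊` indices with budget `exp (α * y ^ β)` contains at least `exp t` multi-indices. -/
noncomputable def cutoff (α β κ t : ℝ) : ℝ :=
  (κ * t / α) ^ (1 / (β + 1))

theorem mul_cutoff_rpow_add_one (hα : 0 < α) (hβ : 0 < β) (hκ : 0 < κ) {t : ℝ} (ht : 0 ≤ t) :
    α * cutoff α β κ t ^ (β + 1) = κ * t := by
  rw [cutoff, ← Real.rpow_mul (by positivity), one_div_mul_cancel (by positivity), Real.rpow_one,
    mul_div_cancel₀ _ hα.ne']

theorem mul_cutoff_rpow (hα : 0 < α) (hβ : 0 < β) (hκ : 0 < κ) {t : ℝ} (ht : 0 ≤ t) :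
    α * cutoff α β κ t ^ β
      = α ^ (1 / (β + 1)) * κ ^ (1 / (1 + 1 / β)) * t ^ (1 / (1 + 1 / β)) := by
  have hexp : 1 / (β + 1) * β = 1 / (1 + 1 / β) := by field_simp
  have hcompl : 1 / (β + 1) = 1 - 1 / (1 + 1 / β) := by field_simp; ring
  rw [cutoff, ← Real.rpow_mul (by positivity), hexp, Real.div_rpow (by positivity) hα.le,
    Real.mul_rpow hκ.le ht, hcompl, Real.rpow_sub hα, Real.rpow_one]
  ring

theorem tendsto_cutoff (hα : 0 < α) (hβ : 0 < β) (hκ : 0 < κ) :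
    Tendsto (cutoff α β κ) atTop atTop :=
  (tendsto_rpow_atTop (by positivity)).comp
    ((tendsto_id.const_mul_atTop hκ).atTop_div_const hα)

end Asymptotics

theorem exp_le_uweight_add_one_of_log_le {α β : ℝ} (hα : 0 ≤ α) (hβ : 0 ≤ β) {lam : ℕ+ → ℝ}
    (hlam : ∀ i : ℕ+, Real.exp (-(α * (i : ℝ) ^ β)) ≤ lam i)
    {π : ℕ+ → MultiIndex} (hπ : Function.Surjective π)
    (hdec : Antitone fun n => uweight lam (π n)) {d : ℕ} {L : ℝ} (hL : 0 ≤ L) {s : ℕ+}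
    (hs : Real.log (s + 1)
      ≤ d * (L - Real.log d) - α * ((d + 1 : ℝ) ^ (β + 1) / (β + 1))) :
    (2 : ℝ) ^ (-(1 : ℝ) / 2) * Real.exp (-(1 / 2 * L)) ≤ uweight lam (π (s + 1)) := by
  have hcount : (s : ℝ) < ∏ i ∈ firstIndices d, Real.exp L * lam i / #(firstIndices d) :=
    calc (s : ℝ) < s + 1 := lt_add_one _
      _ ≤ _ := (Real.log_le_iff_le_exp (by positivity)).1 hs
      _ ≤ _ := exp_le_prod_firstIndices hα hβ hlam d L
  calc (2 : ℝ) ^ (-(1 : ℝ) / 2) * Real.exp (-(1 / 2 * L))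
      = (2 * Real.exp L) ^ (-(1 : ℝ) / 2) := by
        rw [Real.mul_rpow zero_le_two (Real.exp_pos L).le, ← Real.exp_mul]
        ring_nf
    _ ≤ uweight lam (π (s + 1)) :=
        rpow_le_uweight_add_one_of_lt_prod (fun i => (Real.exp_pos _).trans_le (hlam i)) hπ hdec
          (Real.one_le_exp hL) hcount

theorem uweight_lower_bound_exponential_general {α β δ : ℝ} (hα : 0 < α) (hβ : 0 < β)
    (hδ : 0 < δ) (hδβ : δ < β) :
    ∃ c : ℝ, 0 < c ∧ ∃ sbar : ℕ+, ∀ lam : ℕ+ → ℝ,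
      (∀ i : ℕ+, Real.exp (-(α * (i : ℝ) ^ β)) ≤ lam i) →
      ∀ π : ℕ+ → MultiIndex, Function.Surjective π → (Antitone fun n => uweight lam (π n)) →
      ∀ s : ℕ+, sbar ≤ s →
        c * Real.exp (-(1 / 2 * α ^ ((1 : ℝ) / (β + 1))
              * ((β + 1) / (β - δ)) ^ ((1 : ℝ) / (1 + 1 / β))
              * (Real.log ((s : ℝ) + 1)) ^ ((1 : ℝ) / (1 + 1 / β))))
          ≤ uweight lam (π (s + 1)) := by
  have hκ : 0 < (β + 1) / (β - δ) := div_pos (by positivity) (sub_pos.2 hδβ)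
  have hrate : ((β + 1) / (β - δ))⁻¹ < β / (β + 1) := by
    rw [inv_div]
    gcongr
    exact sub_lt_self β hδ
  have hlog : Filter.Tendsto (fun s : ℕ+ => Real.log ((s : ℝ) + 1)) Filter.atTop Filter.atTop :=
    Real.tendsto_log_atTop.comp <| Filter.tendsto_atTop_add_const_right _ 1 <|
      tendsto_natCast_atTop_atTop.comp tendsto_PNat_val_atTop_atTop
  obtain ⟨sbar, hsbar⟩ := Filter.eventually_atTop.1 <|
    ((tendsto_cutoff hα hβ hκ).comp hlog).eventually <|
      (eventually_mul_rpow_div_le_floor_exponent hα hβ hrate).and (Filter.eventually_ge_atTop 0)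
  refine ⟨2 ^ (-(1 : ℝ) / 2), by positivity, sbar, fun lam hlam π hπ hdec s hs => ?_⟩
  obtain ⟨hexponent, hnonneg⟩ := hsbar s hs
  have ht : 0 ≤ Real.log ((s : ℝ) + 1) := Real.log_nonneg (by simp)
  simp only [Function.comp_apply] at hexponent hnonneg
  rw [mul_cutoff_rpow_add_one hα hβ hκ ht, mul_div_cancel_left₀ _ hκ.ne'] at hexponent
  have hbound := exp_le_uweight_add_one_of_log_le hα.le hβ.le hlam hπ hdec
    (mul_nonneg hα.le (Real.rpow_nonneg hnonneg β)) hexponent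
  rw [mul_cutoff_rpow hα hβ hκ ht] at hbound
  simpa only [mul_assoc] using hbound

/-- **Lower bound for `u_{π(s+1)}` for exponential spectral decay
`λ_i = e^{-α i^β}`.**  For every `0 < δ < β` there exist `c > 0` and `s̄` such
that for all `s ≥ s̄`,
`u_{π(s+1)} ≥ c · exp(-(1/2) α^{1/(β+1)} ((β+1)/(β-δ))^{1/(1+1/β)} (log (s+1))^{1/(1+1/β)})`. -/
theorem uweight_lower_bound_exponential
    (α β : ℝ) (hα : 0 < α) (hβ : 0 < β)
    (lam : ℕ+ → ℝ) (hlam : ∀ i : ℕ+, lam i = Real.exp (-(α * (i : ℝ) ^ β)))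
    (π : ℕ+ → MultiIndex) (hbij : Function.Bijective π)
    (hdec : Antitone fun n => uweight lam (π n))
    (δ : ℝ) (hδ : 0 < δ) (hδβ : δ < β) :
    ∃ c : ℝ, 0 < c ∧ ∃ sbar : ℕ+, ∀ s : ℕ+, sbar ≤ s →
      c * Real.exp (-(1 / 2 * α ^ ((1 : ℝ) / (β + 1))
            * ((β + 1) / (β - δ)) ^ ((1 : ℝ) / (1 + 1 / β))
            * (Real.log ((s : ℝ) + 1)) ^ ((1 : ℝ) / (1 + 1 / β))))
        ≤ uweight lam (π (s + 1)) := by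
  obtain ⟨c, hc, sbar, hbound⟩ := uweight_lower_bound_exponential_general hα hβ hδ hδβ
  exact ⟨c, hc, sbar, hbound lam (fun i => (hlam i).ge) π hbij.surjective hdec⟩
end

section
/- Let α > 0 and λ_i := i^{−α} for every i ≥ 1, and for ε > 0 set S(ε) := {γ ∈ Γ : Σ_{i≥1} γ_i/λ_i ≤ ε^{−2}} (a finite set). Then for every δ > 0 and every η > 0 there exists ε̄ with 0 < ε̄ ≤ 2^{−α/2} such that for all ε with 0 < ε ≤ ε̄ one has log(|S(ε)|) ≤ η^{2(1/α + δ)} · ε^{−2/α − 2δ}. -/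
open Finset

/-!
Every `γ` with `∑ γ i / lam i ≤ x` satisfies `γ i ≤ x * lam i`, so it lies in a box whose `i`-th
side has `⌊x * lam i⌋ + 1` points, which is a single point unless `1 ≤ x * lam i`. Since `log`
grows slower than any power, such a side contributes at most a constant times `(x * lam i) ^ θ` to
the logarithm of the size of the box. Summing over `i` gives a bound of order `x ^ θ` as soon as
`lam ^ θ` is summable. For `lam i = i ^ (-α)` this holds for every `θ > 1 / α`, and any
`θ < 1 / α + δ` leaves a spare power of `x` that absorbs all constants.
-/

open Filter Topology Asymptotics

lemma monotone_log_natCast : Monotone fun n : ℕ ↦ Real.log n := by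
  intro m n hmn
  rcases m.eq_zero_or_pos with rfl | hm
  · simpa using Real.log_natCast_nonneg n
  · exact Real.log_le_log (by exact_mod_cast hm) (by exact_mod_cast hmn)

lemma isLittleO_rpow_rpow_atTop {p q : ℝ} (hpq : p < q) :
    (fun x : ℝ ↦ x ^ p) =o[atTop] fun x ↦ x ^ q := by
  have hne : ∀ᶠ x : ℝ in atTop, x ^ q = 0 → x ^ p = 0 := by
    filter_upwards [eventually_gt_atTop 0] with x hx h
    exact absurd h (Real.rpow_pos_of_pos hx q).ne'
  rw [isLittleO_iff_tendsto' hne]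
  refine (tendsto_rpow_neg_atTop (sub_pos.2 hpq)).congr' ?_
  filter_upwards [eventually_gt_atTop 0] with x hx
  rw [neg_sub, Real.rpow_sub hx]

section MultiIndexSublevel

variable {ι : Type*} {lam : ι → ℝ} {x θ : ℝ}

/-- The multi-indices of weighted degree at most `x`, the weight of `i` being `1 / lam i`. The set
`S(ε)` is the case `x = ε⁻²`; the index type is arbitrary. -/
def multiIndexSublevel (lam : ι → ℝ) (x : ℝ) : Set (ι →₀ ℕ) :=
  {γ | ∑ i ∈ γ.support, (γ i : ℝ) / lam i ≤ x}

lemma apply_le_of_mem_multiIndexSublevel (hlam : ∀ i, 0 < lam i) {γ : ι →₀ ℕ}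
    (hγ : γ ∈ multiIndexSublevel lam x) {i : ι} (hi : i ∈ γ.support) :
    (γ i : ℝ) ≤ x * lam i := by
  have hterm : (γ i : ℝ) / lam i ≤ ∑ j ∈ γ.support, (γ j : ℝ) / lam j :=
    single_le_sum (f := fun j ↦ (γ j : ℝ) / lam j)
      (fun j _ ↦ div_nonneg (γ j).cast_nonneg (hlam j).le) hi
  exact (div_le_iff₀ (hlam i)).1 (hterm.trans hγ)

lemma multiIndexSublevel_subset_finsupp (hlam : ∀ i, 0 < lam i) {s : Finset ι}
    (hs : ∀ i, 1 ≤ x * lam i → i ∈ s) :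
    multiIndexSublevel lam x ⊆ s.finsupp fun i ↦ range (⌊x * lam i⌋₊ + 1) := by
  intro γ hγ
  have hle : ∀ i ∈ γ.support, (γ i : ℝ) ≤ x * lam i := fun i hi ↦
    apply_le_of_mem_multiIndexSublevel hlam hγ hi
  rw [mem_coe, mem_finsupp_iff]
  refine ⟨fun i hi ↦ hs i (le_trans ?_ (hle i hi)), fun i _ ↦ mem_range_succ_iff.2 ?_⟩
  · exact_mod_cast Nat.one_le_iff_ne_zero.2 (Finsupp.mem_support_iff.1 hi)
  · by_cases hi : i ∈ γ.support
    · exact Nat.le_floor (hle i hi)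
    · simp [Finsupp.notMem_support_iff.1 hi]

lemma finite_setOf_one_le_mul (hlim : Tendsto lam cofinite (𝓝 0)) (x : ℝ) :
    {i | 1 ≤ x * lam i}.Finite := by
  have hmul : Tendsto (fun i ↦ x * lam i) cofinite (𝓝 0) := by simpa using hlim.const_mul x
  simpa [eventually_cofinite] using hmul.eventually_lt_const one_pos

lemma finite_multiIndexSublevel (hlam : ∀ i, 0 < lam i) (hlim : Tendsto lam cofinite (𝓝 0))
    (x : ℝ) : (multiIndexSublevel lam x).Finite :=
  (finite_toSet _).subset <| multiIndexSublevel_subset_finsupp hlam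
    (s := (finite_setOf_one_le_mul hlim x).toFinset) fun _ hi ↦ by simpa using hi

lemma log_ncard_multiIndexSublevel_le_sum (hlam : ∀ i, 0 < lam i) {s : Finset ι}
    (hs : ∀ i, 1 ≤ x * lam i → i ∈ s) :
    Real.log (multiIndexSublevel lam x).ncard ≤ ∑ i ∈ s, Real.log (⌊x * lam i⌋₊ + 1) := by
  have hcard : (multiIndexSublevel lam x).ncard ≤ ∏ i ∈ s, (⌊x * lam i⌋₊ + 1) := by
    simpa [Set.ncard_coe_finset, card_finsupp] using
      Set.ncard_le_ncard (multiIndexSublevel_subset_finsupp hlam hs) (finite_toSet _)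
  calc Real.log (multiIndexSublevel lam x).ncard
      ≤ Real.log (∏ i ∈ s, (⌊x * lam i⌋₊ + 1) : ℕ) := monotone_log_natCast hcard
    _ = ∑ i ∈ s, Real.log (⌊x * lam i⌋₊ + 1) := by
      push_cast
      exact Real.log_prod fun i _ ↦ by positivity

lemma log_natFloor_add_one_le {y : ℝ} (hy : 1 ≤ y) (hθ : 0 < θ) :
    Real.log (⌊y⌋₊ + 1) ≤ 2 ^ θ / θ * y ^ θ := by
  have hy₀ : 0 ≤ y := zero_le_one.trans hy
  calc Real.log (⌊y⌋₊ + 1)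
      ≤ Real.log (2 * y) :=
        Real.log_le_log (by positivity) (by linarith [Nat.floor_le hy₀])
    _ ≤ (2 * y) ^ θ / θ := Real.log_le_rpow_div (by positivity) hθ
    _ = 2 ^ θ / θ * y ^ θ := by rw [Real.mul_rpow two_pos.le hy₀, div_mul_eq_mul_div]

lemma tendsto_cofinite_zero_of_summable_rpow (hlam : ∀ i, 0 ≤ lam i) (hθ : 0 < θ)
    (hsum : Summable fun i ↦ lam i ^ θ) : Tendsto lam cofinite (𝓝 0) := by
  have hroot := hsum.tendsto_cofinite_zero.rpow_const (p := θ⁻¹) (.inr (inv_nonneg.2 hθ.le))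
  simpa only [Real.rpow_rpow_inv (hlam _) hθ.ne', Real.zero_rpow (inv_ne_zero hθ.ne')] using hroot

lemma log_ncard_multiIndexSublevel_le_rpow (hlam : ∀ i, 0 < lam i) (hθ : 0 < θ)
    (hsum : Summable fun i ↦ lam i ^ θ) (hx : 0 ≤ x) :
    Real.log (multiIndexSublevel lam x).ncard ≤ (2 ^ θ / θ * ∑' i, lam i ^ θ) * x ^ θ := by
  have hlim := tendsto_cofinite_zero_of_summable_rpow (fun i ↦ (hlam i).le) hθ hsum
  set s : Finset ι := (finite_setOf_one_le_mul hlim x).toFinset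
  have hs : ∀ i, i ∈ s ↔ 1 ≤ x * lam i := by simp [s]
  have hs_le : ∑ i ∈ s, lam i ^ θ ≤ ∑' i, lam i ^ θ :=
    hsum.sum_le_tsum s fun i _ ↦ Real.rpow_nonneg (hlam i).le θ
  calc Real.log (multiIndexSublevel lam x).ncard
      ≤ ∑ i ∈ s, Real.log (⌊x * lam i⌋₊ + 1) :=
        log_ncard_multiIndexSublevel_le_sum hlam fun i ↦ (hs i).2
    _ ≤ ∑ i ∈ s, 2 ^ θ / θ * (x * lam i) ^ θ :=
        sum_le_sum fun i hi ↦ log_natFloor_add_one_le ((hs i).1 hi) hθ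
    _ = 2 ^ θ / θ * (∑ i ∈ s, lam i ^ θ) * x ^ θ := by
        simp only [Real.mul_rpow hx (hlam _).le, mul_sum, sum_mul, mul_assoc, mul_comm (x ^ θ)]
    _ ≤ (2 ^ θ / θ * ∑' i, lam i ^ θ) * x ^ θ := by gcongr

lemma isLittleO_log_ncard_multiIndexSublevel (hlam : ∀ i, 0 < lam i) (hθ : 0 < θ)
    (hsum : Summable fun i ↦ lam i ^ θ) {q : ℝ} (hq : θ < q) :
    (fun x ↦ Real.log (multiIndexSublevel lam x).ncard) =o[atTop] fun x : ℝ ↦ x ^ q := by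
  refine (IsBigO.of_bound (2 ^ θ / θ * ∑' i, lam i ^ θ) ?_).trans_isLittleO
    (isLittleO_rpow_rpow_atTop hq)
  filter_upwards [eventually_ge_atTop 0] with x hx
  rw [Real.norm_of_nonneg (Real.log_natCast_nonneg _),
    Real.norm_of_nonneg (Real.rpow_nonneg hx θ)]
  exact log_ncard_multiIndexSublevel_le_rpow hlam hθ hsum hx

end MultiIndexSublevel

lemma inv_sq_rpow {ε : ℝ} (hε : 0 ≤ ε) (q : ℝ) : ((ε ^ 2)⁻¹) ^ q = ε ^ (-(2 * q)) := by
  rw [Real.inv_rpow (sq_nonneg ε), ← Real.rpow_natCast_mul hε, Real.rpow_neg hε, Nat.cast_ofNat]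

lemma tendsto_inv_sq_nhdsGT_zero : Tendsto (fun ε : ℝ ↦ (ε ^ 2)⁻¹) (𝓝[>] 0) atTop := by
  simpa only [← inv_pow, Function.comp_def] using
    (tendsto_pow_atTop two_ne_zero).comp (tendsto_inv_nhdsGT_zero (𝕜 := ℝ))

lemma summable_pnat_rpow_neg_rpow {α θ : ℝ} (hθ : 1 < α * θ) :
    Summable fun i : ℕ+ ↦ ((i : ℝ) ^ (-α)) ^ θ := by
  have hnat : Summable fun n : ℕ ↦ (n : ℝ) ^ (-α * θ) :=
    Real.summable_nat_rpow.2 (by linarith)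
  simpa only [← Real.rpow_mul (Nat.cast_nonneg _), Function.comp_def] using
    hnat.comp_injective PNat.coe_injective

theorem log_size_bound_of_S_algebraic_general {ι : Type*} {α : ℝ} (hα : 0 < α)
    {lam : ι → ℝ} (hlam : ∀ i, 0 < lam i)
    (hsum : ∀ θ, 1 / α < θ → Summable fun i ↦ lam i ^ θ)
    {δ η : ℝ} (hδ : 0 < δ) (hη : 0 < η) :
    ∃ εbar : ℝ, 0 < εbar ∧ εbar ≤ 2 ^ (-α / 2 : ℝ) ∧
      ∀ ε : ℝ, 0 < ε → ε ≤ εbar →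
        (multiIndexSublevel lam (ε ^ 2)⁻¹).Finite ∧
        Real.log (multiIndexSublevel lam (ε ^ 2)⁻¹).ncard
          ≤ η ^ (2 * (1 / α + δ)) * ε ^ (-2 / α - 2 * δ) := by
  obtain ⟨θ, hαθ, hθδ⟩ : ∃ θ, 1 / α < θ ∧ θ < 1 / α + δ := exists_between (by linarith)
  have hθ : 0 < θ := (one_div_pos.2 hα).trans hαθ
  have hlim := tendsto_cofinite_zero_of_summable_rpow (fun i ↦ (hlam i).le) hθ (hsum θ hαθ)
  have hbound := tendsto_inv_sq_nhdsGT_zero.eventually <|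
    (isLittleO_log_ncard_multiIndexSublevel hlam hθ (hsum θ hαθ) hθδ).bound
      (Real.rpow_pos_of_pos hη (2 * (1 / α + δ)))
  obtain ⟨u, hu, hsub⟩ := mem_nhdsGT_iff_exists_Ioc_subset.1 hbound
  refine ⟨min u (2 ^ (-α / 2)), lt_min hu (by positivity), min_le_right _ _, fun ε hε hεu ↦
    ⟨finite_multiIndexSublevel hlam hlim _, ?_⟩⟩
  have hexp : -2 / α - 2 * δ = -(2 * (1 / α + δ)) := by ring
  rw [hexp, ← inv_sq_rpow hε.le]
  exact (le_abs_self _).trans <| (hsub ⟨hε, hεu.trans (min_le_left _ _)⟩).trans_eq <| by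
    rw [Real.norm_of_nonneg (by positivity)]

/-- **Logarithmic size bound for `S(ε)` under algebraic spectral decay
`λ_i = i^{-α}`.**  For every `δ, η > 0` there exists `ε̄` with
`0 < ε̄ ≤ 2^{-α/2}` such that for all `0 < ε ≤ ε̄` the (finite) set
`S(ε) = {γ : ∑ γ_i / λ_i ≤ ε⁻²}` satisfies
`log |S(ε)| ≤ η^{2(1/α + δ)} ε^{-2/α - 2δ}`. -/
theorem log_size_bound_of_S_algebraic
    (α : ℝ) (hα : 0 < α)
    (lam : ℕ+ → ℝ) (hlam : ∀ i : ℕ+, lam i = (i : ℝ) ^ (-α))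
    (δ η : ℝ) (hδ : 0 < δ) (hη : 0 < η) :
    ∃ εbar : ℝ, 0 < εbar ∧ εbar ≤ 2 ^ (-α / 2 : ℝ) ∧
      ∀ ε : ℝ, 0 < ε → ε ≤ εbar →
        {γ : MultiIndex | (∑ i ∈ γ.support, (γ i : ℝ) / lam i) ≤ (ε ^ 2)⁻¹}.Finite ∧
        Real.log ({γ : MultiIndex |
              (∑ i ∈ γ.support, (γ i : ℝ) / lam i) ≤ (ε ^ 2)⁻¹}.ncard : ℝ)
          ≤ η ^ (2 * (1 / α + δ)) * ε ^ (-2 / α - 2 * δ) := by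
  obtain rfl : lam = fun i : ℕ+ ↦ (i : ℝ) ^ (-α) := funext hlam
  exact log_size_bound_of_S_algebraic_general hα (fun i ↦ by positivity)
    (fun θ hθ ↦ summable_pnat_rpow_neg_rpow ((div_lt_iff₀' hα).1 hθ)) hδ hη
end

section
/- Let d ≥ 1 be an integer, let I be a finite set of multi-indices in ℕ_0^d, and let ε > 0. Then there exists R̄ > 0 such that for every R ≥ R̄ and every family of real coefficients (x_γ)_{γ∈I} one has (1 − ε)·Σ_{γ∈I} x_γ² ≤ ∫_{ℝ^d} ( Σ_{γ∈I} x_γ H̃_{γ,R,d}(t) )² dμ_d(t) ≤ (1 + ε)·Σ_{γ∈I} x_γ². In particular, for R ≥ R̄ the family {H̃_{γ,R,d}}_{γ∈I} is a Riesz system in L²(μ_d) with Riesz constants at worst 1 ± ε. -/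
open Finset MeasureTheory ProbabilityTheory Filter

/-- The `n`-th normalized probabilist's Hermite polynomial: the monic
probabilist's Hermite polynomial divided by `√(n!)`. -/
noncomputable def normHermite (n : ℕ) (x : ℝ) : ℝ :=
  (Polynomial.aeval x (Polynomial.hermite n)) / Real.sqrt (Nat.factorial n)

/-- The capped Hermite polynomial `H̃_{n,R}`. -/
noncomputable def cappedHermite (n : ℕ) (R : ℝ) (x : ℝ) : ℝ :=
  if x > R then normHermite n R
  else if x < -R then normHermite n (-R)
  else normHermite n x

/-!
Capping at `±R` is composition with the projection of the line onto `[-R, R]`, so a product of two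
capped Hermite polynomials is a single polynomial composed with that projection, and by dominated
convergence its Gaussian integral tends to the uncapped one. Orthonormality of the Hermite
polynomials follows from Gaussian integration by parts. By Fubini the Gram matrix of the tensor
products is an entrywise product of one-dimensional Gram matrices, hence tends to the identity, and
a finite family whose Gram matrix is close to the identity is a Riesz system with constants close
to `1`.
-/

open Polynomial Topology NNReal

section RieszSystem

variable {α β Ω : Type*} [MeasurableSpace Ω] {μ : Measure Ω} {s : Finset α}

/-- The family `(f i)_{i ∈ s}` is a Riesz system in `L²(μ)` with lower constant `c` and upper
constant `C`. The squared norm of a linear combination is written as a Bochner integral, so this is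
meaningful only if the products `f i * f j` are integrable. -/
def IsRieszSystem (μ : Measure Ω) (s : Finset α) (f : α → Ω → ℝ) (c C : ℝ) : Prop :=
  ∀ x : α → ℝ,
    c * ∑ i ∈ s, x i ^ 2 ≤ ∫ t, (∑ i ∈ s, x i * f i t) ^ 2 ∂μ ∧
      ∫ t, (∑ i ∈ s, x i * f i t) ^ 2 ∂μ ≤ C * ∑ i ∈ s, x i ^ 2

lemma integral_sq_sum_mul {f : α → Ω → ℝ}
    (hf : ∀ i ∈ s, ∀ j ∈ s, Integrable (fun t => f i t * f j t) μ) (x : α → ℝ) :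
    ∫ t, (∑ i ∈ s, x i * f i t) ^ 2 ∂μ =
      ∑ i ∈ s, ∑ j ∈ s, x i * x j * ∫ t, f i t * f j t ∂μ := by
  have hterm : ∀ i ∈ s, ∀ j ∈ s, Integrable (fun t => x i * x j * (f i t * f j t)) μ :=
    fun i hi j hj => (hf i hi j hj).const_mul _
  calc ∫ t, (∑ i ∈ s, x i * f i t) ^ 2 ∂μ
      = ∫ t, ∑ i ∈ s, ∑ j ∈ s, x i * x j * (f i t * f j t) ∂μ := by
        simp only [sq, Finset.sum_mul_sum, mul_mul_mul_comm]
    _ = ∑ i ∈ s, ∑ j ∈ s, ∫ t, x i * x j * (f i t * f j t) ∂μ := by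
        rw [integral_finsetSum _ fun i hi => integrable_finsetSum _ (hterm i hi)]
        exact Finset.sum_congr rfl fun i hi => integral_finsetSum _ (hterm i hi)
    _ = ∑ i ∈ s, ∑ j ∈ s, x i * x j * ∫ t, f i t * f j t ∂μ := by
        simp only [integral_const_mul]

lemma abs_sum_sum_mul_le {E : α → α → ℝ} {η : ℝ} (hE : ∀ i ∈ s, ∀ j ∈ s, |E i j| ≤ η)
    (x : α → ℝ) :
    |∑ i ∈ s, ∑ j ∈ s, x i * x j * E i j| ≤ η * (∑ i ∈ s, |x i|) ^ 2 :=
  calc |∑ i ∈ s, ∑ j ∈ s, x i * x j * E i j|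
      ≤ ∑ i ∈ s, ∑ j ∈ s, |x i * x j * E i j| :=
        (Finset.abs_sum_le_sum_abs _ _).trans
          (Finset.sum_le_sum fun _ _ => Finset.abs_sum_le_sum_abs _ _)
    _ ≤ ∑ i ∈ s, ∑ j ∈ s, η * (|x i| * |x j|) := by
        refine Finset.sum_le_sum fun i hi => Finset.sum_le_sum fun j hj => ?_
        rw [abs_mul, abs_mul, mul_comm η]
        exact mul_le_mul_of_nonneg_left (hE i hi j hj) (by positivity)
    _ = η * (∑ i ∈ s, |x i|) ^ 2 := by
        rw [sq, Finset.sum_mul_sum]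
        simp only [Finset.mul_sum]

variable [DecidableEq α]

lemma abs_sum_sum_mul_sub_sum_sq_le {G : α → α → ℝ} {η : ℝ} (hη : 0 ≤ η)
    (hG : ∀ i ∈ s, ∀ j ∈ s, |G i j - if i = j then 1 else 0| ≤ η) (x : α → ℝ) :
    |∑ i ∈ s, ∑ j ∈ s, x i * x j * G i j - ∑ i ∈ s, x i ^ 2| ≤ η * #s * ∑ i ∈ s, x i ^ 2 := by
  have hdiag : ∑ i ∈ s, x i ^ 2 = ∑ i ∈ s, ∑ j ∈ s, x i * x j * if i = j then 1 else 0 :=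
    Finset.sum_congr rfl fun i hi => by simp [hi, sq]
  calc |∑ i ∈ s, ∑ j ∈ s, x i * x j * G i j - ∑ i ∈ s, x i ^ 2|
      = |∑ i ∈ s, ∑ j ∈ s, x i * x j * (G i j - if i = j then 1 else 0)| := by
        rw [hdiag]
        simp only [← Finset.sum_sub_distrib, ← mul_sub]
    _ ≤ η * (∑ i ∈ s, |x i|) ^ 2 := abs_sum_sum_mul_le hG x
    _ ≤ η * (#s * ∑ i ∈ s, |x i| ^ 2) := by gcongr; exact sq_sum_le_card_mul_sum_sq
    _ = η * #s * ∑ i ∈ s, x i ^ 2 := by simp only [sq_abs, mul_assoc]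

theorem eventually_isRieszSystem_of_tendsto_gram {l : Filter β} {f : β → α → Ω → ℝ}
    (hint : ∀ i ∈ s, ∀ j ∈ s, ∀ᶠ b in l, Integrable (fun t => f b i t * f b j t) μ)
    (hgram : ∀ i ∈ s, ∀ j ∈ s,
      Tendsto (fun b => ∫ t, f b i t * f b j t ∂μ) l (𝓝 (if i = j then 1 else 0)))
    {ε : ℝ} (hε : 0 < ε) :
    ∀ᶠ b in l, IsRieszSystem μ s (f b) (1 - ε) (1 + ε) := by
  have hη : 0 < ε / (#s + 1) := by positivity
  have hηε : ε / (#s + 1) * #s ≤ ε := by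
    rw [div_mul_eq_mul_div, div_le_iff₀ (by positivity)]
    gcongr
    exact le_add_of_nonneg_right zero_le_one
  have hclose : ∀ᶠ b in l, ∀ i ∈ s, ∀ j ∈ s,
      |∫ t, f b i t * f b j t ∂μ - if i = j then 1 else 0| < ε / (#s + 1) := by
    simp only [Filter.eventually_all_finset]
    exact fun i hi j hj => Metric.tendsto_nhds.1 (hgram i hi j hj) _ hη
  have hint' : ∀ᶠ b in l, ∀ i ∈ s, ∀ j ∈ s, Integrable (fun t => f b i t * f b j t) μ := by
    simpa only [Filter.eventually_all_finset] using hint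
  filter_upwards [hclose, hint'] with b hb hbint x
  have hbound := calc
    |∫ t, (∑ i ∈ s, x i * f b i t) ^ 2 ∂μ - ∑ i ∈ s, x i ^ 2|
      ≤ ε / (#s + 1) * #s * ∑ i ∈ s, x i ^ 2 := by
        rw [integral_sq_sum_mul hbint]
        exact abs_sum_sum_mul_sub_sum_sq_le hη.le (fun i hi j hj => (hb i hi j hj).le) x
    _ ≤ ε * ∑ i ∈ s, x i ^ 2 := by gcongr
  obtain ⟨hlower, hupper⟩ := abs_le.1 hbound
  constructor <;> linarith

end RieszSystem

section TensorProduct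

variable {ι β : Type*} [Fintype ι] {E κ : ι → Type*} [∀ i, MeasurableSpace (E i)]
  {μ : ∀ i, Measure (E i)} [∀ i, SigmaFinite (μ i)]

lemma integrable_pi_prod_mul_prod {f g : ∀ i, E i → ℝ}
    (hfg : ∀ i, Integrable (fun x => f i x * g i x) (μ i)) :
    Integrable (fun t : ∀ i, E i => (∏ i, f i (t i)) * ∏ i, g i (t i)) (Measure.pi μ) := by
  simpa only [Finset.prod_mul_distrib] using Integrable.fintype_prod_dep hfg

lemma integral_pi_prod_mul_prod (f g : ∀ i, E i → ℝ) :
    ∫ t : ∀ i, E i, (∏ i, f i (t i)) * ∏ i, g i (t i) ∂Measure.pi μ =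
      ∏ i, ∫ x, f i x * g i x ∂μ i := by
  simpa only [Finset.prod_mul_distrib] using
    integral_fintype_prod_eq_prod (μ := μ) fun i x => f i x * g i x

theorem tendsto_integral_pi_prod_mul_prod [∀ i, DecidableEq (κ i)] {l : Filter β}
    {f : β → ∀ i, κ i → E i → ℝ}
    (hf : ∀ i j k, Tendsto (fun b => ∫ x, f b i j x * f b i k x ∂μ i) l
      (𝓝 (if j = k then 1 else 0)))
    (γ δ : ∀ i, κ i) :
    Tendsto (fun b => ∫ t : ∀ i, E i, (∏ i, f b i (γ i) (t i)) * ∏ i, f b i (δ i) (t i)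
      ∂Measure.pi μ) l (𝓝 (if γ = δ then 1 else 0)) := by
  simp only [integral_pi_prod_mul_prod, funext_iff, ← Fintype.prod_boole]
  exact tendsto_finsetProd _ fun i _ => hf i (γ i) (δ i)

end TensorProduct

section Moments

variable {α Ω : Type*} [MeasurableSpace Ω] {μ : Measure Ω} {X : Ω → ℝ}

lemma integrable_eval_of_integrable_pow (hX : ∀ k : ℕ, Integrable (fun ω => X ω ^ k) μ)
    (p : ℝ[X]) : Integrable (fun ω => p.eval (X ω)) μ := by
  simp only [eval_eq_sum_range]
  exact integrable_finsetSum _ fun k _ => (hX k).const_mul _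

lemma integral_eval_of_integrable_pow (hX : ∀ k : ℕ, Integrable (fun ω => X ω ^ k) μ)
    (p : ℝ[X]) :
    ∫ ω, p.eval (X ω) ∂μ = ∑ k ∈ range (p.natDegree + 1), p.coeff k * ∫ ω, X ω ^ k ∂μ := by
  simp only [eval_eq_sum_range]
  rw [integral_finsetSum _ fun k _ => (hX k).const_mul _]
  simp only [integral_const_mul]

lemma tendsto_integral_eval_of_tendsto_integral_pow {l : Filter α} {Y : α → Ω → ℝ}
    (hX : ∀ k : ℕ, Integrable (fun ω => X ω ^ k) μ)
    (hY : ∀ᶠ a in l, ∀ k : ℕ, Integrable (fun ω => Y a ω ^ k) μ)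
    (hlim : ∀ k : ℕ, Tendsto (fun a => ∫ ω, Y a ω ^ k ∂μ) l (𝓝 (∫ ω, X ω ^ k ∂μ)))
    (p : ℝ[X]) :
    Tendsto (fun a => ∫ ω, p.eval (Y a ω) ∂μ) l (𝓝 (∫ ω, p.eval (X ω) ∂μ)) := by
  rw [integral_eval_of_integrable_pow hX]
  refine Tendsto.congr' ?_ (tendsto_finsetSum _ fun k _ => (hlim k).const_mul (p.coeff k))
  filter_upwards [hY] with a ha
  exact (integral_eval_of_integrable_pow ha p).symm

end Moments

section Cap

/-- The projection of the real line onto `[-R, R]` for `0 ≤ R`. Capping a function at `±R` is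
composing it with `cap R`. -/
def cap (R x : ℝ) : ℝ := max (-R) (min x R)

lemma continuous_cap (R : ℝ) : Continuous (cap R) := by
  unfold cap
  fun_prop

lemma cap_of_abs_le {R x : ℝ} (h : |x| ≤ R) : cap R x = x := by
  rw [abs_le] at h
  rw [cap, min_eq_left h.2, max_eq_right h.1]

lemma abs_cap_le {R : ℝ} (hR : 0 ≤ R) (x : ℝ) : |cap R x| ≤ |x| := by
  grind [cap]

variable {μ : Measure ℝ}

lemma integrable_cap_pow {R : ℝ} (hR : 0 ≤ R) {k : ℕ} (hμ : Integrable (fun x => x ^ k) μ) :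
    Integrable (fun x => cap R x ^ k) μ := by
  refine hμ.mono ((continuous_cap R).pow k).aestronglyMeasurable (ae_of_all _ fun x => ?_)
  simpa only [norm_pow, Real.norm_eq_abs] using pow_le_pow_left₀ (abs_nonneg _) (abs_cap_le hR x) k

lemma tendsto_integral_cap_pow {k : ℕ} (hμ : Integrable (fun x => x ^ k) μ) :
    Tendsto (fun R => ∫ x, cap R x ^ k ∂μ) atTop (𝓝 (∫ x, x ^ k ∂μ)) := by
  refine tendsto_integral_filter_of_dominated_convergence (fun x => ‖x ^ k‖) ?_ ?_ hμ.norm ?_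
  · exact .of_forall fun R => ((continuous_cap R).pow k).aestronglyMeasurable
  · filter_upwards [eventually_ge_atTop 0] with R hR
    refine ae_of_all _ fun x => ?_
    simpa only [norm_pow] using pow_le_pow_left₀ (norm_nonneg _) (abs_cap_le hR x) k
  · refine ae_of_all _ fun x => tendsto_const_nhds.congr' ?_
    filter_upwards [eventually_ge_atTop |x|] with R hR
    rw [cap_of_abs_le hR]

end Cap

section GaussianIntegrationByParts

lemma hasDerivAt_gaussianPDFReal (m : ℝ) (v : ℝ≥0) (x : ℝ) :
    HasDerivAt (gaussianPDFReal m v) (-((x - m) / v) * gaussianPDFReal m v x) x := by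
  have hexponent : HasDerivAt (fun y => -(y - m) ^ 2 / (2 * (v : ℝ))) (-((x - m) / v)) x := by
    refine ((((hasDerivAt_id x).sub_const m).pow 2).neg.div_const (2 * (v : ℝ))).congr_deriv ?_
    simp only [id_eq]
    ring
  rw [gaussianPDFReal_def]
  exact (hexponent.exp.const_mul _).congr_deriv (by ring)

lemma integrable_gaussianReal_iff {m : ℝ} {v : ℝ≥0} (hv : v ≠ 0) {f : ℝ → ℝ} :
    Integrable f (gaussianReal m v) ↔ Integrable fun x => gaussianPDFReal m v x * f x := by
  rw [gaussianReal_of_var_ne_zero m hv, integrable_withDensity_iff_integrable_smul'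
    (measurable_gaussianPDF m v) (ae_of_all _ fun _ => gaussianPDF_lt_top)]
  simp only [toReal_gaussianPDF, smul_eq_mul]

theorem integral_sub_mul_gaussianReal {m : ℝ} {v : ℝ≥0} {f f' : ℝ → ℝ}
    (hderiv : ∀ x, HasDerivAt f (f' x) x) (hf : Integrable f (gaussianReal m v))
    (hf' : Integrable f' (gaussianReal m v))
    (hmul : Integrable (fun x => (x - m) * f x) (gaussianReal m v)) :
    ∫ x, (x - m) * f x ∂gaussianReal m v = v * ∫ x, f' x ∂gaussianReal m v := by
  obtain rfl | hv := eq_or_ne v 0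
  · simp [gaussianReal_zero_var]
  have hv' : (v : ℝ) ≠ 0 := NNReal.coe_ne_zero.2 hv
  have hprimitive (x : ℝ) : HasDerivAt (fun y => -(v * (gaussianPDFReal m v y * f y)))
      (gaussianPDFReal m v x * ((x - m) * f x - v * f' x)) x := by
    refine (((hasDerivAt_gaussianPDFReal m v x).mul
      (hderiv x)).const_mul (v : ℝ)).neg.congr_deriv ?_
    field_simp
    ring
  have hzero : ∫ x, ((x - m) * f x - v * f' x) ∂gaussianReal m v = 0 := by
    rw [integral_gaussianReal_eq_integral_smul hv]
    exact integral_eq_zero_of_hasDerivAt_of_integrable hprimitive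
      ((integrable_gaussianReal_iff hv).1 (hmul.sub (hf'.const_mul _)))
      (((integrable_gaussianReal_iff hv).1 hf).const_mul _).neg
  rwa [integral_sub hmul (hf'.const_mul _), integral_const_mul, sub_eq_zero] at hzero

lemma integrable_pow_gaussianReal (m : ℝ) (v : ℝ≥0) (k : ℕ) :
    Integrable (fun x => x ^ k) (gaussianReal m v) :=
  integrable_pow_of_mem_interior_integrableExpSet (X := fun x => x) (by simp) k

lemma integrable_eval_gaussianReal (m : ℝ) (v : ℝ≥0) (p : ℝ[X]) :
    Integrable (fun x => p.eval x) (gaussianReal m v) :=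
  integrable_eval_of_integrable_pow (integrable_pow_gaussianReal m v) p

lemma integral_mul_eval_gaussianReal (p : ℝ[X]) :
    ∫ x, x * p.eval x ∂gaussianReal 0 1 = ∫ x, p.derivative.eval x ∂gaussianReal 0 1 := by
  have hmul : Integrable (fun x => (x - 0) * p.eval x) (gaussianReal 0 1) :=
    (integrable_eval_gaussianReal 0 1 (X * p)).congr (.of_forall fun x => by simp)
  simpa only [sub_zero, NNReal.coe_one, one_mul] using
    integral_sub_mul_gaussianReal p.hasDerivAt (integrable_eval_gaussianReal 0 1 p)
      (integrable_eval_gaussianReal 0 1 _) hmul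

end GaussianIntegrationByParts

section Hermite

lemma iterate_derivative_natDegree {S : Type*} [Semiring S] (p : S[X]) :
    derivative^[p.natDegree] p = C (p.natDegree.factorial • p.leadingCoeff) := by
  have hconst : (derivative^[p.natDegree] p).natDegree = 0 :=
    Nat.eq_zero_of_le_zero ((natDegree_iterate_derivative p _).trans_eq (Nat.sub_self _))
  rw [eq_C_of_natDegree_eq_zero hconst, coeff_iterate_derivative, zero_add, Nat.descFactorial_self]
  rfl

theorem integral_hermite_mul (n : ℕ) (q : ℝ[X]) :
    ∫ x, ((hermite n).map (Int.castRingHom ℝ) * q).eval x ∂gaussianReal 0 1 =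
      ∫ x, (derivative^[n] q).eval x ∂gaussianReal 0 1 := by
  induction n generalizing q with
  | zero => simp
  | succ n ih =>
    set h := (hermite n).map (Int.castRingHom ℝ) with hh
    have hrec : (hermite (n + 1)).map (Int.castRingHom ℝ) * q =
        X * (h * q) - derivative (h * q) + h * derivative q := by
      rw [hermite_succ, Polynomial.map_sub, Polynomial.map_mul, map_X, ← derivative_map, ← hh,
        derivative_mul]
      ring
    have hint := integrable_eval_gaussianReal 0 1
    have hstein : ∫ x, (X * (h * q) - derivative (h * q)).eval x ∂gaussianReal 0 1 = 0 := by
      simp only [eval_sub]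
      rw [integral_sub (hint _) (hint _), sub_eq_zero]
      simpa only [eval_mul, eval_X] using integral_mul_eval_gaussianReal (h * q)
    rw [hrec]
    simp only [eval_add]
    rw [integral_add (hint _) (hint _), hstein, zero_add, ih, Function.iterate_succ_apply]

theorem integral_hermite_mul_hermite (n m : ℕ) :
    ∫ x, ((hermite n).map (Int.castRingHom ℝ) * (hermite m).map (Int.castRingHom ℝ)).eval x
      ∂gaussianReal 0 1 = if n = m then (n.factorial : ℝ) else 0 := by
  wlog hmn : m ≤ n generalizing n m
  · rw [mul_comm, this m n (by lia)]
    grind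
  rw [integral_hermite_mul, iterate_derivative_map]
  obtain rfl | hlt := hmn.eq_or_lt
  · have htop : derivative^[m] (hermite m) = C (m.factorial : ℤ) := by
      simpa using iterate_derivative_natDegree (hermite m)
    simp [htop]
  · rw [iterate_derivative_eq_zero (by rwa [natDegree_hermite]), if_neg hlt.ne']
    simp

/-- The normalized probabilist's Hermite polynomial, as a polynomial; `normHermite n` is its
evaluation. -/
noncomputable def normHermitePolynomial (n : ℕ) : ℝ[X] :=
  C (√(n.factorial : ℝ))⁻¹ * (hermite n).map (Int.castRingHom ℝ)

lemma eval_normHermitePolynomial (n : ℕ) (x : ℝ) :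
    (normHermitePolynomial n).eval x = normHermite n x := by
  simp [normHermitePolynomial, normHermite, aeval_def, eval_map, div_eq_inv_mul]

theorem integral_normHermitePolynomial_mul (n m : ℕ) :
    ∫ x, (normHermitePolynomial n * normHermitePolynomial m).eval x ∂gaussianReal 0 1 =
      if n = m then 1 else 0 := by
  have hfactor : normHermitePolynomial n * normHermitePolynomial m =
      C ((√(n.factorial : ℝ))⁻¹ * (√(m.factorial : ℝ))⁻¹) *
        ((hermite n).map (Int.castRingHom ℝ) * (hermite m).map (Int.castRingHom ℝ)) := by
    rw [normHermitePolynomial, normHermitePolynomial, C_mul, mul_mul_mul_comm]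
  simp only [hfactor, eval_C_mul]
  rw [integral_const_mul, integral_hermite_mul_hermite]
  split_ifs with h
  · subst h
    rw [← mul_inv, Real.mul_self_sqrt (by positivity), inv_mul_cancel₀ (by positivity)]
  · rw [mul_zero]

end Hermite

section CappedHermite

lemma cappedHermite_eq_eval_cap (n : ℕ) {R : ℝ} (hR : 0 ≤ R) (x : ℝ) :
    cappedHermite n R x = (normHermitePolynomial n).eval (cap R x) := by
  rw [eval_normHermitePolynomial, cappedHermite]
  grind [cap]

lemma cappedHermite_mul_eq_eval_cap (n m : ℕ) {R : ℝ} (hR : 0 ≤ R) (x : ℝ) :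
    cappedHermite n R x * cappedHermite m R x =
      (normHermitePolynomial n * normHermitePolynomial m).eval (cap R x) := by
  rw [eval_mul, cappedHermite_eq_eval_cap n hR, cappedHermite_eq_eval_cap m hR]

lemma integrable_cappedHermite_mul (n m : ℕ) {R : ℝ} (hR : 0 ≤ R) :
    Integrable (fun x => cappedHermite n R x * cappedHermite m R x) (gaussianReal 0 1) := by
  simp only [cappedHermite_mul_eq_eval_cap n m hR]
  exact integrable_eval_of_integrable_pow
    (fun k => integrable_cap_pow hR (integrable_pow_gaussianReal 0 1 k)) _

theorem tendsto_integral_cappedHermite_mul (n m : ℕ) :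
    Tendsto (fun R => ∫ x, cappedHermite n R x * cappedHermite m R x ∂gaussianReal 0 1) atTop
      (𝓝 (if n = m then 1 else 0)) := by
  have hmoment := integrable_pow_gaussianReal 0 1
  rw [← integral_normHermitePolynomial_mul]
  refine Tendsto.congr' ?_ (tendsto_integral_eval_of_tendsto_integral_pow hmoment
    ((eventually_ge_atTop 0).mono fun R hR k => integrable_cap_pow hR (hmoment k))
    (fun k => tendsto_integral_cap_pow (hmoment k)) _)
  filter_upwards [eventually_ge_atTop 0] with R hR
  simp only [cappedHermite_mul_eq_eval_cap n m hR]

theorem eventually_isRieszSystem_cappedHermite {ι : Type*} [Fintype ι] (I : Finset (ι → ℕ))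
    {ε : ℝ} (hε : 0 < ε) :
    ∀ᶠ R in atTop, IsRieszSystem (Measure.pi fun _ : ι => gaussianReal 0 1) I
      (fun γ t => ∏ i, cappedHermite (γ i) R (t i)) (1 - ε) (1 + ε) := by
  classical
  refine eventually_isRieszSystem_of_tendsto_gram (fun γ _ δ _ => ?_) (fun γ _ δ _ => ?_) hε
  · filter_upwards [eventually_ge_atTop 0] with R hR
    exact integrable_pi_prod_mul_prod fun i => integrable_cappedHermite_mul (γ i) (δ i) hR
  · exact tendsto_integral_pi_prod_mul_prod (f := fun R _ n => cappedHermite n R)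
      (fun _ => tendsto_integral_cappedHermite_mul) γ δ

end CappedHermite

/-- **Riesz system property of capped Hermite products.**  For a finite set `I`
of multi-indices in `ℕ_0^d` and `ε > 0`, there is `R̄ > 0` such that for all
`R ≥ R̄` and all real coefficients `(x_γ)_{γ ∈ I}`,
`(1-ε) ∑ x_γ² ≤ ∫ (∑_{γ∈I} x_γ H̃_{γ,R,d}(t))² dμ_d(t) ≤ (1+ε) ∑ x_γ²`. -/
theorem cappedHermite_riesz_system
    (d : ℕ) (hd : 1 ≤ d) (I : Finset (Fin d → ℕ)) (ε : ℝ) (hε : 0 < ε) :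
    ∃ Rbar : ℝ, 0 < Rbar ∧ ∀ R : ℝ, Rbar ≤ R → ∀ x : (Fin d → ℕ) → ℝ,
      (1 - ε) * ∑ γ ∈ I, (x γ) ^ 2 ≤
        (∫ t : Fin d → ℝ, (∑ γ ∈ I, x γ * ∏ i, cappedHermite (γ i) R (t i)) ^ 2
          ∂(Measure.pi fun _ : Fin d => gaussianReal 0 1)) ∧
      (∫ t : Fin d → ℝ, (∑ γ ∈ I, x γ * ∏ i, cappedHermite (γ i) R (t i)) ^ 2
          ∂(Measure.pi fun _ : Fin d => gaussianReal 0 1))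
        ≤ (1 + ε) * ∑ γ ∈ I, (x γ) ^ 2 := by
  obtain ⟨R₀, hR₀⟩ := eventually_atTop.1 (eventually_isRieszSystem_cappedHermite I hε)
  exact ⟨max R₀ 1, by positivity, fun R hR => hR₀ R ((le_max_left _ _).trans hR)⟩
end
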